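/- At most one peripheral eigenvalue of the twisted transfer operator: fix d, D ≥ 1 and a tensor A : Fin d → Matrix (Fin D) (Fin D) ℂ whose transfer matrix T is gapped and normalized (1 is a root of multiplicity one of the characteristic polynomial of T and every other root has modulus < 1). Then for every k ≥ 2, the twisted transfer operator T̂_k = (T ⊗ₖ T)^(k−1) * U * (T ⊗ₖ T) * U has at most one characteristic-polynomial root of modulus 1, counted with multiplicity (i.e. the multiset (T̂_k.charpoly.roots.filter (fun z => ‖z‖ = 1)) has cardinality ≤ 1), and every root z of its characteristic polynomial with ‖z‖ = 1 satisfies z = 1. -/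

import Mathlib

open Matrix
open scoped Kronecker Classical

/-- The transfer matrix `T = ∑ i, A i ⊗ₖ (A i).map star` of the MPS tensor `A`. -/
noncomputable def mpsTransfer {d D : ℕ} (A : Fin d → Matrix (Fin D) (Fin D) ℂ) :
    Matrix (Fin D × Fin D) (Fin D × Fin D) ℂ :=
  ∑ i, A i ⊗ₖ (A i).map star

/-- The partial-swap matrix `U` on `(Fin D × Fin D) × (Fin D × Fin D)`. -/
def partialSwap (D : ℕ) :
    Matrix ((Fin D × Fin D) × (Fin D × Fin D)) ((Fin D × Fin D) × (Fin D × Fin D)) ℂ :=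
  fun x y =>
    if x.1.1 = y.1.1 ∧ x.2.1 = y.2.1 ∧ x.1.2 = y.2.2 ∧ x.2.2 = y.1.2 then 1 else 0

/-- The twisted transfer operator `T̂_k = (T ⊗ₖ T)^(k-1) * U * (T ⊗ₖ T) * U`. -/
noncomputable def twistedTransfer {d D : ℕ} (k : ℕ)
    (A : Fin d → Matrix (Fin D) (Fin D) ℂ) :
    Matrix ((Fin D × Fin D) × (Fin D × Fin D)) ((Fin D × Fin D) × (Fin D × Fin D)) ℂ :=
  (mpsTransfer A ⊗ₖ mpsTransfer A) ^ (k - 1) * partialSwap D *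
    (mpsTransfer A ⊗ₖ mpsTransfer A) * partialSwap D


section Spectral

variable {n : Type*} [Fintype n] [DecidableEq n]

lemma det_aeval_eq_prod_roots (M : Matrix n n ℂ) (q : Polynomial ℂ) :
    (Polynomial.aeval M q).det = (M.charpoly.roots.map (fun z => q.eval z)).prod := by
  have hlin : ∀ a : ℂ, (Polynomial.aeval M (Polynomial.X - Polynomial.C a)).det
      = (M.charpoly.roots.map (fun z => (Polynomial.X - Polynomial.C a).eval z)).prod := by
    intro a
    have h1 : M.charpoly.eval a = (M.charpoly.roots.map (fun z => a - z)).prod := by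
      conv_lhs => rw [(IsAlgClosed.splits M.charpoly).eq_prod_roots_of_monic M.charpoly_monic]
      rw [Polynomial.eval_multiset_prod, Multiset.map_map]
      simp
    have h2 : M.charpoly.roots.card = Fintype.card n := by
      rw [← (IsAlgClosed.splits M.charpoly).natDegree_eq_card_roots,
        M.charpoly_natDegree_eq_dim]
    have h3 : Polynomial.aeval M (Polynomial.X - Polynomial.C a) = -(Matrix.scalar n a - M) := by
      simp [Matrix.algebraMap_eq_diagonal]
    rw [h3, Matrix.det_neg, ← Matrix.eval_charpoly, h1, ← h2, ← Multiset.card_map (fun z => a - z),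
      ← Multiset.prod_map_neg]
    simp [Multiset.map_map]
  have hC : ∀ c : ℂ, (Polynomial.aeval M (Polynomial.C c)).det
      = (M.charpoly.roots.map (fun z => (Polynomial.C c).eval z)).prod := by
    intro c
    have h2 : M.charpoly.roots.card = Fintype.card n := by
      rw [← (IsAlgClosed.splits M.charpoly).natDegree_eq_card_roots,
        M.charpoly_natDegree_eq_dim]
    simp [Matrix.algebraMap_eq_diagonal, h2]
  have hmul : ∀ p q : Polynomial ℂ,
      (Polynomial.aeval M p).det = (M.charpoly.roots.map (fun z => p.eval z)).prod →
      (Polynomial.aeval M q).det = (M.charpoly.roots.map (fun z => q.eval z)).prod →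
      (Polynomial.aeval M (p * q)).det = (M.charpoly.roots.map (fun z => (p * q).eval z)).prod := by
    intro p q hp hq
    simp only [map_mul, Matrix.det_mul, hp, hq, Polynomial.eval_mul, Multiset.prod_map_mul]
  rw [(IsAlgClosed.splits q).eq_prod_roots]
  refine hmul _ _ (hC _) ?_
  induction q.roots using Multiset.induction_on with
  | empty => simp
  | cons a s ih =>
    rw [Multiset.map_cons, Multiset.prod_cons]
    exact hmul _ _ (hlin a) ih

lemma roots_charpoly_matrix_pow (M : Matrix n n ℂ) (m : ℕ) :
    (M ^ m).charpoly.roots = M.charpoly.roots.map (fun z => z ^ m) := by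
  have : (M ^ m).charpoly
      = ((M.charpoly.roots.map (fun z => z ^ m)).map
          (fun w => Polynomial.X - Polynomial.C w)).prod := by
    refine Polynomial.funext fun x => ?_
    have h := det_aeval_eq_prod_roots M (Polynomial.C x - Polynomial.X ^ m)
    rw [Matrix.eval_charpoly, Polynomial.eval_multiset_prod, Multiset.map_map, Multiset.map_map]
    have h3 : Polynomial.aeval M (Polynomial.C x - Polynomial.X ^ m) = Matrix.scalar n x - M ^ m := by
      simp [Matrix.algebraMap_eq_diagonal]
    rw [← h3, h]
    simp
  rw [this, Polynomial.roots_multiset_prod_X_sub_C]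

lemma trace_matrix_pow (M : Matrix n n ℂ) (m : ℕ) :
    (M ^ m).trace = (M.charpoly.roots.map (fun z => z ^ m)).sum := by
  rw [Matrix.trace_eq_sum_roots_charpoly, roots_charpoly_matrix_pow]

end Spectral

section Rep

variable {D : ℕ}

/-- four-layer ladder matrix -/
noncomputable def ladP {ι κ : Type} [Fintype ι] [Fintype κ]
    (B : ι → κ → Matrix (Fin D) (Fin D) ℂ) :
    Matrix ((Fin D × Fin D) × (Fin D × Fin D)) ((Fin D × Fin D) × (Fin D × Fin D)) ℂ :=
  ∑ t : (ι × ι) × (κ × κ), (B t.1.1 t.2.1 ⊗ₖ (B t.1.1 t.2.2).map star) ⊗ₖ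
    (B t.1.2 t.2.2 ⊗ₖ (B t.1.2 t.2.1).map star)

/-- two-layer ladder matrix -/
noncomputable def ladQ {ι κ : Type} [Fintype ι] [Fintype κ]
    (B : ι → κ → Matrix (Fin D) (Fin D) ℂ) :
    Matrix (Fin D × Fin D) (Fin D × Fin D) ℂ :=
  ∑ t : ι × κ, B t.1 t.2 ⊗ₖ (B t.1 t.2).map star

/-- simultaneous ladder representation -/
def LadRep (M : Matrix ((Fin D × Fin D) × (Fin D × Fin D)) ((Fin D × Fin D) × (Fin D × Fin D)) ℂ)
    (N : Matrix (Fin D × Fin D) (Fin D × Fin D) ℂ) : Prop :=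
  ∃ (ι κ : Type) (_ : Fintype ι) (_ : Fintype κ) (B : ι → κ → Matrix (Fin D) (Fin D) ℂ),
    M = ladP B ∧ N = ladQ B

lemma map_star_mul' (X Y : Matrix (Fin D) (Fin D) ℂ) :
    (X * Y).map star = X.map star * Y.map star := by
  ext i j
  simp [Matrix.mul_apply]

lemma LadRep.mul {M M' N N'} (h : LadRep (D := D) M N) (h' : LadRep (D := D) M' N') :
    LadRep (M * M') (N * N') := by
  obtain ⟨ι, κ, _, _, B, rfl, rfl⟩ := h
  obtain ⟨ι', κ', _, _, B', rfl, rfl⟩ := h'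
  refine ⟨ι × ι', κ × κ', inferInstance, inferInstance,
    fun x y => B x.1 y.1 * B' x.2 y.2, ?_, ?_⟩
  · unfold ladP
    rw [Finset.sum_mul_sum, ← Fintype.sum_prod_type']
    refine Fintype.sum_equiv
      ⟨fun t => (((t.1.1.1, t.2.1.1), (t.1.1.2, t.2.1.2)), ((t.1.2.1, t.2.2.1), (t.1.2.2, t.2.2.2))),
       fun t => (((t.1.1.1, t.1.2.1), (t.2.1.1, t.2.2.1)), ((t.1.1.2, t.1.2.2), (t.2.1.2, t.2.2.2))),
       fun _ => rfl, fun _ => rfl⟩ _ _ ?_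
    intro t
    simp only [Equiv.coe_fn_mk, map_star_mul', Matrix.mul_kronecker_mul]
  · unfold ladQ
    rw [Finset.sum_mul_sum, ← Fintype.sum_prod_type']
    refine Fintype.sum_equiv
      ⟨fun t => ((t.1.1, t.2.1), (t.1.2, t.2.2)),
       fun t => ((t.1.1, t.2.1), (t.1.2, t.2.2)),
       fun _ => rfl, fun _ => rfl⟩ _ _ ?_
    intro t
    simp only [Equiv.coe_fn_mk, map_star_mul', Matrix.mul_kronecker_mul]

lemma LadRep.one : LadRep (D := D) 1 1 := by
  have h : (1 : Matrix (Fin D) (Fin D) ℂ).map star = 1 :=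
    Matrix.map_one _ (star_zero _) (star_one _)
  refine ⟨Unit, Unit, inferInstance, inferInstance, fun _ _ => 1, ?_, ?_⟩
  · simp [ladP, h]
  · simp [ladQ, h]

lemma LadRep.pow {M N} (h : LadRep (D := D) M N) (m : ℕ) : LadRep (M ^ m) (N ^ m) := by
  induction m with
  | zero => simpa using LadRep.one
  | succ m ih => rw [pow_succ, pow_succ]; exact ih.mul h

lemma LadRep.transfer {d : ℕ} (A : Fin d → Matrix (Fin D) (Fin D) ℂ) :
    LadRep (mpsTransfer A ⊗ₖ mpsTransfer A) (mpsTransfer A) := by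
  refine ⟨Fin d, Unit, inferInstance, inferInstance, fun i _ => A i, ?_, ?_⟩
  · ext p q
    simp [ladP, mpsTransfer, Fintype.sum_prod_type, Matrix.sum_apply, Matrix.kroneckerMap_apply,
      Finset.sum_mul_sum]
  · simp [ladQ, mpsTransfer, Fintype.sum_prod_type]

lemma partialSwap_conj (M : Matrix ((Fin D × Fin D) × (Fin D × Fin D))
      ((Fin D × Fin D) × (Fin D × Fin D)) ℂ) (p q) :
    (partialSwap D * M * partialSwap D) p q =
      M ((p.1.1, p.2.2), (p.2.1, p.1.2)) ((q.1.1, q.2.2), (q.2.1, q.1.2)) := by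
  have h1 : ∀ (x y : (Fin D × Fin D) × (Fin D × Fin D)), partialSwap D x y =
      if y = ((x.1.1, x.2.2), (x.2.1, x.1.2)) then 1 else 0 := by
    rintro ⟨⟨a, b⟩, ⟨c, e⟩⟩ ⟨⟨a', b'⟩, ⟨c', e'⟩⟩
    simp only [partialSwap, Prod.mk.injEq]
    congr 1
    apply propext
    constructor
    · rintro ⟨rfl, rfl, rfl, rfl⟩; simp
    · rintro ⟨⟨rfl, rfl⟩, rfl, rfl⟩; simp
  have h2 : ∀ (x y : (Fin D × Fin D) × (Fin D × Fin D)), partialSwap D x y =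
      if x = ((y.1.1, y.2.2), (y.2.1, y.1.2)) then 1 else 0 := by
    rintro ⟨⟨a, b⟩, ⟨c, e⟩⟩ ⟨⟨a', b'⟩, ⟨c', e'⟩⟩
    simp only [partialSwap, Prod.mk.injEq]
    congr 1
    apply propext
    constructor
    · rintro ⟨rfl, rfl, rfl, rfl⟩; simp
    · rintro ⟨⟨rfl, rfl⟩, rfl, rfl⟩; simp
  rw [Matrix.mul_apply]
  simp only [h2 _ q, mul_ite, mul_one, mul_zero, Finset.sum_ite_eq', Finset.sum_ite_eq,
    Finset.mem_univ, if_true]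
  rw [Matrix.mul_apply]
  simp only [h1 p, ite_mul, one_mul, zero_mul, Finset.sum_ite_eq', Finset.sum_ite_eq,
    Finset.mem_univ, if_true]

lemma LadRep.swapped {d : ℕ} (A : Fin d → Matrix (Fin D) (Fin D) ℂ) :
    LadRep (partialSwap D * (mpsTransfer A ⊗ₖ mpsTransfer A) * partialSwap D)
      (mpsTransfer A) := by
  refine ⟨Unit, Fin d, inferInstance, inferInstance, fun _ i => A i, ?_, ?_⟩
  · ext p q
    rw [partialSwap_conj]
    simp only [ladP, mpsTransfer, Fintype.sum_prod_type, Matrix.sum_apply,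
      Matrix.kroneckerMap_apply, Finset.sum_mul_sum, Finset.univ_unique, Finset.sum_singleton,
      Matrix.map_apply]
    refine Finset.sum_congr rfl fun i _ => Finset.sum_congr rfl fun j _ => ?_
    ring
  · simp [ladQ, mpsTransfer, Fintype.sum_prod_type]

lemma LadRep.twisted {d : ℕ} (k : ℕ) (A : Fin d → Matrix (Fin D) (Fin D) ℂ) :
    LadRep (twistedTransfer k A) (mpsTransfer A ^ (k - 1 + 1)) := by
  have h := ((LadRep.transfer A).pow (k - 1)).mul (LadRep.swapped A)
  rw [← pow_succ] at h
  simpa only [twistedTransfer, Matrix.mul_assoc] using h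

lemma trace_map_star (X : Matrix (Fin D) (Fin D) ℂ) : (X.map star).trace = star X.trace := by
  simp [Matrix.trace]

lemma LadRep.trace_bound {M N} (h : LadRep (D := D) M N) :
    ∃ r s : ℝ, 0 ≤ r ∧ r ≤ s ^ 2 ∧ M.trace = (r : ℂ) ∧ N.trace = (s : ℂ) := by
  obtain ⟨ι, κ, _, _, B, rfl, rfl⟩ := h
  let f : ι → κ → ℂ := fun x y => (B x y).trace
  refine ⟨∑ y, ∑ y', ‖∑ x, f x y * star (f x y')‖ ^ 2, ∑ y, ∑ x, ‖f x y‖ ^ 2,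
    by positivity, ?_, ?_, ?_⟩
  · rw [sq, Finset.sum_mul_sum]
    refine Finset.sum_le_sum fun y _ => Finset.sum_le_sum fun y' _ => ?_
    calc ‖∑ x, f x y * star (f x y')‖ ^ 2 ≤ (∑ x, ‖f x y‖ * ‖f x y'‖) ^ 2 := by
          gcongr
          refine (norm_sum_le _ _).trans (le_of_eq ?_)
          simp
      _ ≤ _ := Finset.sum_mul_sq_le_sq_mul_sq _ _ _
  · simp only [ladP, Matrix.trace_sum, Matrix.trace_kronecker, trace_map_star,
      Fintype.sum_prod_type]
    push_cast
    have : ∀ z : ℂ, (‖z‖ : ℂ) ^ 2 = z * star z := fun z => (Complex.mul_conj' z).symm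
    simp only [this, star_sum, star_mul', star_star, Finset.sum_mul_sum]
    rw [Finset.sum_congr rfl fun x _ => Finset.sum_comm, Finset.sum_comm]
    refine Finset.sum_congr rfl fun y _ => ?_
    rw [Finset.sum_congr rfl fun x _ => Finset.sum_comm, Finset.sum_comm]
    refine Finset.sum_congr rfl fun y' _ => ?_
    refine Finset.sum_congr rfl fun x _ => Finset.sum_congr rfl fun x' _ => ?_
    simp only [f]; ring
  · simp only [ladQ, Matrix.trace_sum, Matrix.trace_kronecker, trace_map_star,
      Fintype.sum_prod_type]
    push_cast
    have : ∀ z : ℂ, (‖z‖ : ℂ) ^ 2 = z * star z := fun z => (Complex.mul_conj' z).symm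
    simp only [this]
    rw [Finset.sum_comm]

end Rep

section Asym

open Filter Topology

lemma tendsto_sum_pow_zero (s : Multiset ℂ) (hs : ∀ z ∈ s, ‖z‖ < 1) :
    Tendsto (fun m : ℕ => (s.map (fun z => z ^ m)).sum) atTop (𝓝 0) := by
  induction s using Multiset.induction_on with
  | empty => simp
  | cons a s ih =>
    simp only [Multiset.map_cons, Multiset.sum_cons]
    simpa using (tendsto_pow_atTop_nhds_zero_of_norm_lt_one (hs a (by simp))).add
      (ih fun z hz => hs z (by simp [hz]))

lemma exists_frequently_pow (s : Multiset ℂ) :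
    ∃ᶠ m : ℕ in atTop, ∀ z ∈ s, (3 / 4 : ℝ) * ‖z‖ ^ m ≤ (z ^ m).re := by
  let u : ℂ → Circle := fun z => Circle.exp z.arg
  have hc : MapClusterPt 1 atTop (fun m : ℕ => u ^ m) := mapClusterPt_one_atTop_pow u
  have hev : ∀ᶠ v : ℂ → Circle in 𝓝 1, ∀ z ∈ s.toFinset, (3 / 4 : ℝ) < ((v z : Circle) : ℂ).re := by
    rw [Filter.eventually_all_finset]
    intro z _
    have hcont : Continuous fun v : ℂ → Circle => ((v z : Circle) : ℂ).re := by fun_prop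
    refine hcont.continuousAt.eventually_const_lt ?_
    norm_num
  refine (hc.frequently hev).mono ?_
  intro m hm z hz
  have h1 := hm z (by simpa using hz)
  have h2 : z ^ m = ((‖z‖ ^ m : ℝ) : ℂ) * ((u z ^ m : Circle) : ℂ) := by
    conv_lhs => rw [← Complex.norm_mul_exp_arg_mul_I z, mul_pow]
    simp [u]
  rw [h2, Complex.re_ofReal_mul, mul_comm]
  exact mul_le_mul_of_nonneg_left h1.le (by positivity)

lemma card_ge_one_le (s : Multiset ℂ) (b : ℕ → ℝ) (hb : Tendsto b atTop (𝓝 1))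
    (h : ∀ m : ℕ, ((s.map (fun z => z ^ m)).sum).re ≤ b m) :
    (s.filter (fun z => 1 ≤ ‖z‖)).card ≤ 1 := by
  by_contra hcon
  have hev : ∀ᶠ m in atTop, b m < 5 / 4 := hb.eventually_lt_const (by norm_num)
  obtain ⟨m, hm, hbm⟩ := ((exists_frequently_pow s).and_eventually hev).exists
  have key : ∀ t : Multiset ℂ, (∀ z ∈ t, (3 / 4 : ℝ) * ‖z‖ ^ m ≤ (z ^ m).re) →
      (3 / 4 : ℝ) * (t.filter (fun z => 1 ≤ ‖z‖)).card ≤ ((t.map (fun z => z ^ m)).sum).re := by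
    intro t
    induction t using Multiset.induction_on with
    | empty => simp
    | cons a t ih =>
      intro ht
      have h1 := ih fun z hz => ht z (by simp [hz])
      have h2 := ht a (by simp)
      rw [Multiset.map_cons, Multiset.sum_cons, Complex.add_re]
      by_cases ha : 1 ≤ ‖a‖
      · rw [Multiset.filter_cons_of_pos (p := fun z : ℂ => 1 ≤ ‖z‖) _ ha, Multiset.card_cons]
        have := one_le_pow₀ ha (n := m)
        push_cast
        linarith
      · rw [Multiset.filter_cons_of_neg (p := fun z : ℂ => 1 ≤ ‖z‖) _ ha]
        have : 0 ≤ ‖a‖ ^ m := by positivity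
        linarith
  have h1 := key s hm
  have h2 := h m
  have h3 : (2 : ℝ) ≤ (s.filter (fun z => 1 ≤ ‖z‖)).card := by
    exact_mod_cast (by omega : 2 ≤ (s.filter (fun z => 1 ≤ ‖z‖)).card)
  linarith

lemma unimodular_eq_one (s : Multiset ℂ) (r : ℕ → ℝ) (hr : ∀ m, 0 ≤ r m)
    (h : ∀ m : ℕ, (s.map (fun z => z ^ m)).sum = (r m : ℂ))
    (hs : (s.filter (fun z => 1 ≤ ‖z‖)).card ≤ 1) (z : ℂ) (hz : z ∈ s) (hz1 : ‖z‖ = 1) :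
    z = 1 := by
  obtain ⟨t, rfl⟩ := Multiset.exists_cons_of_mem hz
  have ht : ∀ w ∈ t, ‖w‖ < 1 := by
    intro w hw
    by_contra hcon
    rw [Multiset.filter_cons_of_pos (p := fun z : ℂ => 1 ≤ ‖z‖) _ hz1.ge, Multiset.card_cons] at hs
    have : 0 < (t.filter (fun z => 1 ≤ ‖z‖)).card :=
      Multiset.card_pos_iff_exists_mem.2 ⟨w, Multiset.mem_filter.2 ⟨hw, not_lt.1 hcon⟩⟩
    omega
  have h0 := tendsto_sum_pow_zero t ht
  have h1 : Tendsto (fun m : ℕ => (r m : ℂ) - z ^ m) atTop (𝓝 0) := by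
    refine h0.congr fun m => ?_
    rw [← h m]; simp
  have h2 : Tendsto r atTop (𝓝 1) := by
    rw [tendsto_iff_norm_sub_tendsto_zero]
    refine squeeze_zero (fun _ => norm_nonneg _) (fun m => ?_) (by simpa using h1.norm)
    have := abs_norm_sub_norm_le (r m : ℂ) (z ^ m)
    simpa [hz1, abs_of_nonneg (hr m)] using this
  have h3 : Tendsto (fun m : ℕ => z ^ m) atTop (𝓝 1) := by
    have := ((Complex.continuous_ofReal.tendsto 1).comp h2).sub h1
    simpa using this
  have h4 : Tendsto (fun m : ℕ => z ^ (m + 1)) atTop (𝓝 1) := h3.comp (tendsto_add_atTop_nat 1)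
  have h5 : Tendsto (fun m : ℕ => z ^ (m + 1)) atTop (𝓝 (1 * z)) := by
    simpa only [pow_succ] using h3.mul_const z
  simpa using tendsto_nhds_unique h5 h4

end Asym
/-- At most one peripheral eigenvalue of the twisted transfer operator: if the transfer matrix
`T` is gapped and normalized (its characteristic polynomial has `1` as a root of multiplicity
one and every other root has modulus `< 1`), then for `k ≥ 2` the twisted transfer operator
`T̂_k` has at most one eigenvalue of modulus `1` (with multiplicity), and every such eigenvalue
equals `1`. -/
theorem twistedTransfer_at_most_one_peripheral_eigenvalue
    (d D : ℕ) (hd : 1 ≤ d) (hD : 1 ≤ D)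
    (A : Fin d → Matrix (Fin D) (Fin D) ℂ)
    (h1 : Polynomial.rootMultiplicity 1 (mpsTransfer A).charpoly = 1)
    (h2 : ∀ z ∈ (mpsTransfer A).charpoly.roots, z ≠ 1 → ‖z‖ < 1)
    (k : ℕ) (hk : 2 ≤ k) :
    ((twistedTransfer k A).charpoly.roots.filter (fun z => ‖z‖ = 1)).card ≤ 1 ∧
    ∀ z ∈ (twistedTransfer k A).charpoly.roots, ‖z‖ = 1 → z = 1 := by
  have hrep := LadRep.twisted k A
  set T := mpsTransfer A with hT
  have hk0 : k - 1 + 1 ≠ 0 := by omega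
  choose r q hr0 hrq hr hq using fun m : ℕ => (hrep.pow m).trace_bound
  simp only [trace_matrix_pow] at hr
  simp only [← pow_mul, trace_matrix_pow] at hq
  have hmem : (1 : ℂ) ∈ T.charpoly.roots := by
    rw [← Multiset.one_le_count_iff_mem, Polynomial.count_roots, h1]
  obtain ⟨t, ht⟩ := Multiset.exists_cons_of_mem hmem
  have hcount : t.count 1 = 0 := by
    have h := Polynomial.count_roots T.charpoly (a := 1)
    rw [h1, ht, Multiset.count_cons_self] at h
    omega
  have hlt : ∀ z ∈ t, ‖z‖ < 1 := by
    intro z hz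
    refine h2 z (by rw [ht]; simp [hz]) ?_
    rintro rfl
    exact Multiset.count_eq_zero.1 hcount hz
  have hlim : Filter.Tendsto (fun m => q m) Filter.atTop (nhds 1) := by
    have h0 := (tendsto_sum_pow_zero t hlt).const_add 1
    have hmul : Filter.Tendsto (fun m : ℕ => (k - 1 + 1) * m) Filter.atTop Filter.atTop :=
      Filter.tendsto_id.const_mul_atTop' (by omega)
    have h3 := (Complex.continuous_re.tendsto _).comp (h0.comp hmul)
    simp only [add_zero, Complex.one_re] at h3
    refine h3.congr fun m => ?_
    have := hq m
    rw [ht] at this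
    simp only [Multiset.map_cons, Multiset.sum_cons, one_pow] at this
    simp only [Function.comp]
    rw [this, Complex.ofReal_re]
  have hcard := card_ge_one_le (twistedTransfer k A).charpoly.roots (fun m => q m ^ 2)
    (by simpa using hlim.pow 2) (fun m => by rw [hr m, Complex.ofReal_re]; exact hrq m)
  refine ⟨(Multiset.card_le_card ?_).trans hcard, fun z hz hz1 => ?_⟩
  · exact Multiset.monotone_filter_right _ fun z hz => hz.ge
  · exact unimodular_eq_one _ r hr0 hr hcard z hz hz1
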